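/- arXiv:2103.06257 — 3 statements merged into one kernel-verified Lean document; each statement's English description precedes it below -/
import Mathlib

section
/- Fix a finite-horizon MDP with finite nonempty state space S, finite nonempty action space A, horizon T ≥ 1, initial distribution p₁, strictly positive dynamics p, a full-support policy π, and a strictly positive reward function r : S×A → ℝ (r(s,a) > 0). Define the pessimistic reward r̄(s,a,s') = (1/T)·log r(s,a) − log p(s'|s,a) and set J_MaxEnt(π; p, r̄) = E_{p^π}[Σ_{t=1}^T (r̄(s_t,a_t,s_{t+1}) − log π(a_t|s_t))]. Then for every ε ≥ 0 and every strictly positive dynamics p̃ in the robust set, i.e. satisfying E_{p^π}[d(p,p̃;τ)] ≤ ε where d(p,p̃;τ) = Σ_{t=1}^T log Σ_{a'∈A, s'∈S} p(s'|s_t,a')/p̃(s'|s_t,a'), the return of π under the adversarial dynamics is lower-bounded: E_{p̃^π}[Σ_{t=1}^T r(s_t,a_t)] ≥ exp(J_MaxEnt(π; p, r̄) + log T − ε); and since the entropy terms −log π(a_t|s_t) are nonnegative, also J_MaxEnt(π; p̃, r) ≥ exp(J_MaxEnt(π; p, r̄) + log T − ε). (Theorem 2: MaxEnt RL applied to the pessimistic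 reward lower-bounds the robust RL objective over adversarially perturbed dynamics, stated with the explicit adversary budget ε.) -/
/-!
The bound is a combination of two uses of Jensen's inequality over trajectories.

Importance weighting gives `E_{p̃^π}[∑ r] = E_{p^π}[exp X]` with
`X = log ∑ r + ∑ (log p̃ - log p)`, so `E_{p̃^π}[∑ r] ≥ exp E_{p^π}[X]` (`exp_Exp_le`), and
concavity of `log` bounds `log ∑ r` below by `log T + (1/T) ∑ log r` (`log_card_add_le`).

What is left is to compare `E_{p^π}[∑ log p̃]` with `E_{p^π}[-∑ log π - d]`. Put
`D s = ∑_{a,s'} p(s'|s,a) / p̃(s'|s,a)`. The kernel `k(s,a,s') = p(s'|s,a) / (p̃(s'|s,a) D s)` is a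
probability on pairs `(a, s')`, so it defines a trajectory distribution of total mass one
(`sum_traj_kernel`). Its density relative to `p^π` is `exp Y` with
`Y = -∑ (log π + log p̃ + log D)`, and `Y ≤ exp Y - 1` gives `E_{p^π}[Y] ≤ 0` (`Exp_kernel_le`).
Working with the whole trajectory avoids computing any state marginals.
-/

open Finset Real

/-- Probability of a trajectory `(states, actions)` in a finite-horizon MDP with horizon `T`,
initial distribution `p1`, dynamics `p` and policy `pol`. -/
noncomputable def trajProb {S A : Type*} [Fintype S] [Fintype A] (T : ℕ)
    (p1 : S → ℝ) (p : S → A → S → ℝ) (pol : S → A → ℝ)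
    (τ : (Fin (T + 1) → S) × (Fin T → A)) : ℝ :=
  p1 (τ.1 0) * ∏ t : Fin T,
    pol (τ.1 t.castSucc) (τ.2 t) * p (τ.1 t.castSucc) (τ.2 t) (τ.1 t.succ)

/-- Expectation of a trajectory functional under the trajectory distribution `p^π`. -/
noncomputable def Exp {S A : Type*} [Fintype S] [Fintype A] (T : ℕ)
    (p1 : S → ℝ) (p : S → A → S → ℝ) (pol : S → A → ℝ)
    (f : ((Fin (T + 1) → S) × (Fin T → A)) → ℝ) : ℝ :=
  ∑ τ : (Fin (T + 1) → S) × (Fin T → A), trajProb T p1 p pol τ * f τ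

/-- MaxEnt RL objective (entropy coefficient 1):
`J_MaxEnt(π; p, r) = E_{p^π}[Σ_t (r(s_t,a_t) − log π(a_t|s_t))]`. -/
noncomputable def JMaxEnt {S A : Type*} [Fintype S] [Fintype A] (T : ℕ)
    (p1 : S → ℝ) (p : S → A → S → ℝ) (pol : S → A → ℝ) (r : S → A → ℝ) : ℝ :=
  Exp T p1 p pol (fun τ => ∑ t : Fin T,
    (r (τ.1 t.castSucc) (τ.2 t) - Real.log (pol (τ.1 t.castSucc) (τ.2 t))))

/-- A kernel `k` from states to (action, next state) pairs preserves mass: the induced weights on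
trajectories have the same total as the initial weights. The initial weights `p1` are arbitrary so
that the induction, which peels off the first step, can replace `p1` by its pushforward. -/
lemma sum_traj_kernel {S A : Type*} [Fintype S] [Fintype A] (k : S → A → S → ℝ)
    (hk : ∀ s, ∑ a : A, ∑ s' : S, k s a s' = 1) (T : ℕ) (p1 : S → ℝ) :
    ∑ τ : (Fin (T + 1) → S) × (Fin T → A),
      p1 (τ.1 0) * ∏ t : Fin T, k (τ.1 t.castSucc) (τ.2 t) (τ.1 t.succ) = ∑ s, p1 s := by
  induction T generalizing p1 with
  | zero =>
    rw [Fintype.sum_prod_type]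
    simp only [univ_eq_empty, prod_empty, mul_one, sum_const, card_univ, Fintype.card_unique,
      one_smul]
    exact Fintype.sum_equiv (Equiv.funUnique (Fin 1) S) _ _ (fun _ => rfl)
  | succ n ih =>
    rw [Fintype.sum_prod_type,
      ← (Fin.consEquiv (fun _ : Fin (n + 2) => S)).sum_comp, Fintype.sum_prod_type]
    simp_rw [← (Fin.consEquiv (fun _ : Fin (n + 1) => A)).sum_comp, Fintype.sum_prod_type,
      Fin.prod_univ_succ]
    simp only [Fin.consEquiv_apply, Fin.castSucc_zero, Fin.cons_zero, Fin.cons_succ,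
      ← Fin.succ_castSucc]
    have h := ih (fun s' => ∑ s, ∑ a, p1 s * k s a s')
    rw [Fintype.sum_prod_type] at h
    have hR : ∑ s', ∑ s, ∑ a, p1 s * k s a s' = ∑ s, p1 s := by
      rw [Finset.sum_comm]
      refine Finset.sum_congr rfl fun s _ => ?_
      rw [Finset.sum_comm]
      simp_rw [← Finset.mul_sum]
      rw [hk, mul_one]
    rw [hR] at h
    rw [← h, Finset.sum_comm]
    refine Finset.sum_congr rfl fun σ _ => ?_
    simp_rw [Finset.sum_mul]
    symm
    rw [Finset.sum_comm]
    refine Finset.sum_congr rfl fun s _ => ?_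
    rw [Finset.sum_comm]
    refine Finset.sum_congr rfl fun a _ => ?_
    refine Finset.sum_congr rfl fun α _ => ?_
    ring

lemma trajProb_nonneg {S A : Type*} [Fintype S] [Fintype A] (T : ℕ)
    {p1 : S → ℝ} (hp1 : ∀ s, 0 ≤ p1 s) {p : S → A → S → ℝ} (hp : ∀ s a s', 0 < p s a s')
    {pol : S → A → ℝ} (hpol : ∀ s a, 0 < pol s a) (τ : (Fin (T + 1) → S) × (Fin T → A)) :
    0 ≤ trajProb T p1 p pol τ :=
  mul_nonneg (hp1 _) (prod_nonneg fun _ _ => (mul_pos (hpol _ _) (hp _ _ _)).le)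

lemma sum_trajProb {S A : Type*} [Fintype S] [Fintype A] (T : ℕ)
    {p1 : S → ℝ} (hp1sum : ∑ s : S, p1 s = 1)
    {p : S → A → S → ℝ} (hpsum : ∀ s a, ∑ s' : S, p s a s' = 1)
    {pol : S → A → ℝ} (hpolsum : ∀ s, ∑ a : A, pol s a = 1) :
    ∑ τ, trajProb T p1 p pol τ = 1 := by
  have := sum_traj_kernel (fun s a s' => pol s a * p s a s')
    (fun s => by simp_rw [← mul_sum, hpsum, mul_one]; exact hpolsum s) T p1
  rw [hp1sum] at this
  exact this

lemma Exp_mono {S A : Type*} [Fintype S] [Fintype A] (T : ℕ)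
    {p1 : S → ℝ} (hp1 : ∀ s, 0 ≤ p1 s) {p : S → A → S → ℝ} (hp : ∀ s a s', 0 < p s a s')
    {pol : S → A → ℝ} (hpol : ∀ s a, 0 < pol s a)
    {f g : (Fin (T + 1) → S) × (Fin T → A) → ℝ} (h : ∀ τ, f τ ≤ g τ) :
    Exp T p1 p pol f ≤ Exp T p1 p pol g :=
  sum_le_sum fun τ _ => mul_le_mul_of_nonneg_left (h τ) (trajProb_nonneg T hp1 hp hpol τ)

/-- Jensen's inequality with importance weights: `exp` of the `p^π`-expectation of
`log F + ∑ (log p̃ - log p)` is at most the `p̃^π`-expectation of `F`. -/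
lemma exp_Exp_le {S A : Type*} [Fintype S] [Fintype A] (T : ℕ)
    {p1 : S → ℝ} (hp1 : ∀ s, 0 ≤ p1 s) (hp1sum : ∑ s : S, p1 s = 1)
    {p : S → A → S → ℝ} (hp : ∀ s a s', 0 < p s a s')
    (hpsum : ∀ s a, ∑ s' : S, p s a s' = 1)
    {pt : S → A → S → ℝ} (hpt : ∀ s a s', 0 < pt s a s')
    {pol : S → A → ℝ} (hpol : ∀ s a, 0 < pol s a)
    (hpolsum : ∀ s, ∑ a : A, pol s a = 1)
    (F : (Fin (T + 1) → S) × (Fin T → A) → ℝ) (hF : ∀ τ, 0 < F τ) :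
    Real.exp (Exp T p1 p pol fun τ => Real.log (F τ) + ∑ t : Fin T,
      (Real.log (pt (τ.1 t.castSucc) (τ.2 t) (τ.1 t.succ))
        - Real.log (p (τ.1 t.castSucc) (τ.2 t) (τ.1 t.succ)))) ≤ Exp T p1 pt pol F := by
  have hJ := convexOn_exp.map_sum_le (t := univ) (w := trajProb T p1 p pol)
    (p := fun τ => Real.log (F τ) + ∑ t : Fin T,
      (Real.log (pt (τ.1 t.castSucc) (τ.2 t) (τ.1 t.succ))
        - Real.log (p (τ.1 t.castSucc) (τ.2 t) (τ.1 t.succ))))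
    (fun τ _ => trajProb_nonneg T hp1 hp hpol τ) (sum_trajProb T hp1sum hpsum hpolsum)
    (fun _ _ => Set.mem_univ _)
  simp only [smul_eq_mul] at hJ
  refine hJ.trans (le_of_eq ?_)
  refine sum_congr rfl fun τ _ => ?_
  rw [Real.exp_add, Real.exp_log (hF τ), Real.exp_sum]
  simp_rw [Real.exp_sub, Real.exp_log (hpt _ _ _), Real.exp_log (hp _ _ _)]
  have : (∏ t : Fin T, pol (τ.1 t.castSucc) (τ.2 t) * p (τ.1 t.castSucc) (τ.2 t) (τ.1 t.succ))
      * (∏ t : Fin T, pt (τ.1 t.castSucc) (τ.2 t) (τ.1 t.succ)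
        / p (τ.1 t.castSucc) (τ.2 t) (τ.1 t.succ))
      = ∏ t : Fin T, pol (τ.1 t.castSucc) (τ.2 t) * pt (τ.1 t.castSucc) (τ.2 t) (τ.1 t.succ) := by
    rw [← prod_mul_distrib]
    refine prod_congr rfl fun t _ => ?_
    have := (hp (τ.1 t.castSucc) (τ.2 t) (τ.1 t.succ)).ne'
    field_simp
  unfold trajProb
  rw [← this]
  ring

/-- Gibbs' inequality on trajectories: relative to `p^π`, the log-density of the trajectory
distribution with kernel `p / (p̃ D)` has nonpositive expectation. -/
lemma Exp_kernel_le {S A : Type*} [Fintype S] [Fintype A] [Nonempty S] [Nonempty A] (T : ℕ)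
    {p1 : S → ℝ} (hp1 : ∀ s, 0 ≤ p1 s) (hp1sum : ∑ s : S, p1 s = 1)
    {p : S → A → S → ℝ} (hp : ∀ s a s', 0 < p s a s')
    (hpsum : ∀ s a, ∑ s' : S, p s a s' = 1)
    {pt : S → A → S → ℝ} (hpt : ∀ s a s', 0 < pt s a s')
    {pol : S → A → ℝ} (hpol : ∀ s a, 0 < pol s a)
    (hpolsum : ∀ s, ∑ a : A, pol s a = 1) :
    Exp T p1 p pol (fun τ => ∑ t : Fin T,
      (-Real.log (pol (τ.1 t.castSucc) (τ.2 t))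
        - Real.log (pt (τ.1 t.castSucc) (τ.2 t) (τ.1 t.succ))
        - Real.log (∑ a' : A, ∑ s' : S,
          p (τ.1 t.castSucc) a' s' / pt (τ.1 t.castSucc) a' s'))) ≤ 0 := by
  set D : S → ℝ := fun s => ∑ a' : A, ∑ s' : S, p s a' s' / pt s a' s' with hD
  have hDpos : ∀ s, 0 < D s := fun s =>
    sum_pos (fun a _ => sum_pos (fun s' _ => div_pos (hp _ _ _) (hpt _ _ _)) univ_nonempty)
      univ_nonempty
  have hmass := sum_traj_kernel (fun s a s' => p s a s' / pt s a s' / D s)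
    (fun s => by simp_rw [← sum_div]; exact div_self (hDpos s).ne') T p1
  rw [hp1sum] at hmass
  have hprob := sum_trajProb T hp1sum hpsum hpolsum
  have key : ∀ τ : (Fin (T + 1) → S) × (Fin T → A),
      trajProb T p1 p pol τ * ∑ t : Fin T,
        (-Real.log (pol (τ.1 t.castSucc) (τ.2 t))
          - Real.log (pt (τ.1 t.castSucc) (τ.2 t) (τ.1 t.succ))
          - Real.log (D (τ.1 t.castSucc)))
      ≤ p1 (τ.1 0) * (∏ t : Fin T, p (τ.1 t.castSucc) (τ.2 t) (τ.1 t.succ)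
          / pt (τ.1 t.castSucc) (τ.2 t) (τ.1 t.succ) / D (τ.1 t.castSucc))
        - trajProb T p1 p pol τ := by
    intro τ
    set y := ∑ t : Fin T,
        (-Real.log (pol (τ.1 t.castSucc) (τ.2 t))
          - Real.log (pt (τ.1 t.castSucc) (τ.2 t) (τ.1 t.succ))
          - Real.log (D (τ.1 t.castSucc))) with hy
    have h1 : y ≤ Real.exp y - 1 := by linarith [Real.add_one_le_exp y]
    have h2 := mul_le_mul_of_nonneg_left h1 (trajProb_nonneg T hp1 hp hpol τ)
    refine h2.trans (le_of_eq ?_)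
    rw [mul_sub, mul_one]
    congr 1
    rw [hy, Real.exp_sum]
    unfold trajProb
    rw [mul_assoc, ← prod_mul_distrib]
    congr 1
    refine prod_congr rfl fun t _ => ?_
    rw [Real.exp_sub, Real.exp_sub, Real.exp_neg, Real.exp_log (hpt _ _ _),
      Real.exp_log (hpol _ _), Real.exp_log (hDpos _)]
    have h3 := (hpol (τ.1 t.castSucc) (τ.2 t)).ne'
    have h4 := (hpt (τ.1 t.castSucc) (τ.2 t) (τ.1 t.succ)).ne'
    have h5 := (hDpos (τ.1 t.castSucc)).ne'
    field_simp
  have := sum_le_sum fun τ (_ : τ ∈ univ) => key τ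
  rw [sum_sub_distrib, hmass, hprob, sub_self] at this
  exact this

/-- The inequality of arithmetic and geometric means in logarithmic form. -/
lemma log_card_add_le (T : ℕ) (hT : 1 ≤ T) (x : Fin T → ℝ) (hx : ∀ t, 0 < x t) :
    Real.log T + ∑ t, (1 : ℝ) / T * Real.log (x t) ≤ Real.log (∑ t, x t) := by
  have hT' : (0 : ℝ) < T := by exact_mod_cast hT
  have : Nonempty (Fin T) := ⟨⟨0, hT⟩⟩
  have h := strictConcaveOn_log_Ioi.concaveOn.le_map_sum (t := univ)
    (w := fun _ : Fin T => (1 : ℝ) / T) (p := x) (fun _ _ => by positivity)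
    (by simp [hT'.ne']) (fun t _ => hx t)
  have hsum : 0 < ∑ t, x t := sum_pos (fun t _ => hx t) univ_nonempty
  simp only [smul_eq_mul] at h
  rw [← mul_sum univ x, one_div, Real.log_mul (inv_ne_zero hT'.ne') hsum.ne', Real.log_inv] at h
  rw [one_div]
  linarith

/-- **Theorem 2 (MaxEnt RL is robust to adversarial dynamics).** With pessimistic reward
`r̄(s,a,s') = (1/T)·log r(s,a) − log p(s'|s,a)`, for every `ε ≥ 0` and every strictly
positive dynamics `p̃` with `E_{p^π}[d(p,p̃;τ)] ≤ ε`, the return of `π` under `p̃` is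
lower-bounded by `exp(J_MaxEnt(π; p, r̄) + log T − ε)`, and so is `J_MaxEnt(π; p̃, r)`. -/
theorem maxent_dynamics_robustness
    {S A : Type*} [Fintype S] [Fintype A] [Nonempty S] [Nonempty A]
    (T : ℕ) (hT : 1 ≤ T)
    (p1 : S → ℝ) (hp1 : ∀ s, 0 ≤ p1 s) (hp1sum : ∑ s : S, p1 s = 1)
    (p : S → A → S → ℝ) (hp : ∀ s a s', 0 < p s a s')
    (hpsum : ∀ s a, ∑ s' : S, p s a s' = 1)
    (pt : S → A → S → ℝ) (hpt : ∀ s a s', 0 < pt s a s')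
    (hptsum : ∀ s a, ∑ s' : S, pt s a s' = 1)
    (pol : S → A → ℝ) (hpol : ∀ s a, 0 < pol s a)
    (hpolsum : ∀ s, ∑ a : A, pol s a = 1)
    (r : S → A → ℝ) (hr : ∀ s a, 0 < r s a)
    (ε : ℝ) (hε : 0 ≤ ε)
    (hrobust : Exp T p1 p pol (fun τ => ∑ t : Fin T,
        Real.log (∑ a' : A, ∑ s' : S,
          p (τ.1 t.castSucc) a' s' / pt (τ.1 t.castSucc) a' s')) ≤ ε) :
    Exp T p1 pt pol (fun τ => ∑ t : Fin T, r (τ.1 t.castSucc) (τ.2 t))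
      ≥ Real.exp (Exp T p1 p pol (fun τ => ∑ t : Fin T,
          (((1 : ℝ) / T) * Real.log (r (τ.1 t.castSucc) (τ.2 t))
            - Real.log (p (τ.1 t.castSucc) (τ.2 t) (τ.1 t.succ))
            - Real.log (pol (τ.1 t.castSucc) (τ.2 t))))
          + Real.log (T : ℝ) - ε)
    ∧ JMaxEnt T p1 pt pol r
      ≥ Real.exp (Exp T p1 p pol (fun τ => ∑ t : Fin T,
          (((1 : ℝ) / T) * Real.log (r (τ.1 t.castSucc) (τ.2 t))
            - Real.log (p (τ.1 t.castSucc) (τ.2 t) (τ.1 t.succ))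
            - Real.log (pol (τ.1 t.castSucc) (τ.2 t))))
          + Real.log (T : ℝ) - ε) := by
  have hT' : Nonempty (Fin T) := ⟨⟨0, hT⟩⟩
  have hret : Real.exp (Exp T p1 p pol (fun τ => ∑ t : Fin T,
          (((1 : ℝ) / T) * Real.log (r (τ.1 t.castSucc) (τ.2 t))
            - Real.log (p (τ.1 t.castSucc) (τ.2 t) (τ.1 t.succ))
            - Real.log (pol (τ.1 t.castSucc) (τ.2 t))))
          + Real.log (T : ℝ) - ε)
      ≤ Exp T p1 pt pol (fun τ => ∑ t : Fin T, r (τ.1 t.castSucc) (τ.2 t)) := by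
    refine le_trans (Real.exp_le_exp.2 ?_) (exp_Exp_le T hp1 hp1sum hp hpsum hpt hpol hpolsum
      (fun τ => ∑ t : Fin T, r (τ.1 t.castSucc) (τ.2 t))
      (fun τ => sum_pos (fun _ _ => hr _ _) univ_nonempty))
    have hY := Exp_kernel_le T hp1 hp1sum hp hpsum hpt hpol hpolsum
    have hprob := sum_trajProb T hp1sum hpsum hpolsum
    have hlogT : Real.log (T : ℝ) = Exp T p1 p pol (fun _ => Real.log (T : ℝ)) := by
      unfold Exp
      rw [← sum_mul, hprob, one_mul]
    have hmono := Exp_mono T hp1 hp hpol (fun τ : (Fin (T + 1) → S) × (Fin T → A) =>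
      log_card_add_le T hT (fun t => r (τ.1 t.castSucc) (τ.2 t)) (fun t => hr _ _))
    -- by linearity of the expectation, `hmono`, `hY` and `hrobust` add up to the goal
    unfold Exp at *
    simp only [sum_add_distrib, sum_sub_distrib, mul_add, mul_sub, sum_neg_distrib, mul_neg] at *
    linarith
  refine ⟨hret, hret.trans (Exp_mono T hp1 hpt hpol fun τ => sum_le_sum fun t _ => ?_)⟩
  have hle : pol (τ.1 t.castSucc) (τ.2 t) ≤ 1 := by
    rw [← hpolsum (τ.1 t.castSucc)]
    exact single_le_sum (fun a _ => (hpol _ a).le) (mem_univ _)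
  linarith [Real.log_nonpos (hpol _ _).le hle]
end

section
/- Fix a finite-horizon MDP with finite nonempty state space S, finite nonempty action space A, horizon T ≥ 1, strictly positive initial distribution p₁ (p₁(s) > 0 for all s), and strictly positive dynamics p. Let π* be any full-support policy and define the reward r(s,a) = log π*(a|s). Then for every full-support policy π, J_MaxEnt(π; p, r) = −E_{p^π}[Σ_{t=1}^T KL(π(·|s_t) ‖ π*(·|s_t))] ≤ 0, with equality if and only if π = π*; in particular, π* is the unique maximizer of J_MaxEnt(·; p, r) over full-support policies. Consequently, if R is any nonempty collection of reward functions and π* is a full-support maximizer of the robust objective π ↦ inf_{r'∈R} E_{p^π}[Σ_{t=1}^T r'(s_t,a_t)], then every maximizer of the MaxEnt objective with reward log π* is a maximizer of that robust objective. (Appendix Lemma: for any collection of reward functions there is a reward whose MaxEnt-optimal policy is an optimal robust-reward policy.) -/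
/-!
The identity `J_MaxEnt(π) = -E[Σ_t KL(π(·|s_t) ‖ π*(·|s_t))]` is the tower property: given `s_t`,
the action `a_t` is distributed as `π(·|s_t)`, so `g(s_t,a_t) = log π*(a_t|s_t) - log π(a_t|s_t)`
may be replaced in expectation by its average over `a_t ∼ π(·|s_t)`, which is minus the KL divergence.
This replacement (`exp_sum_eq_exp_sum_average`) is proved by induction on the horizon, conditioning
on the first step (`exp_succ`), for an arbitrary weight in place of the initial distribution.

Gibbs' inequality (`gibbs_nonneg`, `gibbs_eq`) then gives the sign. Since all trajectories have
positive probability, a vanishing objective forces the KL divergence to vanish along the trajectory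
that is constantly `s`, for each `s`; here `T ≥ 1` is essential. So the only maximizer of the MaxEnt
objective is `π*`, and the claim on the robust objective follows by substitution.
-/

open Finset Real

/-- Conditioning on the first state-action pair: the remaining trajectory is that of an MDP with
horizon `T` and initial distribution `p s a`. -/
lemma exp_succ {S A : Type*} [Fintype S] [Fintype A] (T : ℕ)
    (p1 : S → ℝ) (p : S → A → S → ℝ) (pol : S → A → ℝ)
    (f : ((Fin (T + 1 + 1) → S) × (Fin (T + 1) → A)) → ℝ) :
    Exp (T + 1) p1 p pol f = ∑ s : S, ∑ a : A, p1 s * pol s a *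
      Exp T (p s a) p pol (fun τ => f (Fin.cons s τ.1, Fin.cons a τ.2)) := by
  unfold Exp
  rw [Fintype.sum_prod_type, ← (Fin.consEquiv (fun _ => S)).sum_comp, Fintype.sum_prod_type]
  refine Finset.sum_congr rfl fun s _ => ?_
  have hA : ∀ x : Fin (T + 1) → S,
      ∑ y : Fin (T + 1) → A, trajProb (T + 1) p1 p pol (Fin.cons s x, y) * f (Fin.cons s x, y)
        = ∑ a : A, ∑ y : Fin T → A, p1 s * pol s a *
          (trajProb T (p s a) p pol (x, y) * f (Fin.cons s x, Fin.cons a y)) := by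
    intro x
    rw [← (Fin.consEquiv (fun _ => A)).sum_comp, Fintype.sum_prod_type]
    refine Finset.sum_congr rfl fun a _ => Finset.sum_congr rfl fun y _ => ?_
    simp only [trajProb, Fin.consEquiv, Equiv.coe_fn_mk, Fin.prod_univ_succ, Fin.cons_zero,
      Fin.cons_succ, Fin.castSucc_zero, Fin.castSucc_succ]
    ring
  calc _ = ∑ x : Fin (T + 1) → S, ∑ a : A, ∑ y : Fin T → A, p1 s * pol s a *
          (trajProb T (p s a) p pol (x, y) * f (Fin.cons s x, Fin.cons a y)) :=
        Finset.sum_congr rfl fun x _ => hA x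
    _ = _ := by
        rw [Finset.sum_comm]
        refine Finset.sum_congr rfl fun a _ => ?_
        rw [Fintype.sum_prod_type, Finset.mul_sum]
        simp only [Finset.mul_sum]

lemma exp_add {S A : Type*} [Fintype S] [Fintype A] (T : ℕ)
    (p1 : S → ℝ) (p : S → A → S → ℝ) (pol : S → A → ℝ)
    (f g : ((Fin (T + 1) → S) × (Fin T → A)) → ℝ) :
    Exp T p1 p pol (fun τ => f τ + g τ) = Exp T p1 p pol f + Exp T p1 p pol g := by
  simp only [Exp, mul_add, Finset.sum_add_distrib]

/-- The trajectory weights have the same total mass as `p1`, which need not be normalised. -/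
lemma exp_const {S A : Type*} [Fintype S] [Fintype A] (T : ℕ)
    (p1 : S → ℝ) (p : S → A → S → ℝ) (hpsum : ∀ s a, ∑ s' : S, p s a s' = 1)
    (pol : S → A → ℝ) (hpol : ∀ s, ∑ a : A, pol s a = 1) (c : ℝ) :
    Exp T p1 p pol (fun _ => c) = (∑ s, p1 s) * c := by
  induction T generalizing p1 with
  | zero =>
    rw [Exp, Fintype.sum_prod_type, Finset.sum_mul,
      ← (Equiv.funUnique (Fin 1) S).symm.sum_comp]
    simp [trajProb]
  | succ T ih =>
    rw [exp_succ]
    simp only [ih, hpsum, one_mul, Finset.sum_mul]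
    refine Finset.sum_congr rfl fun s _ => ?_
    rw [← Finset.sum_mul, ← Finset.mul_sum, hpol, mul_one]

/-- Tower property: in expectation, `g (s_t, a_t)` may be replaced by its average over
`a_t ∼ pol(·|s_t)`. -/
lemma exp_sum_eq_exp_sum_average {S A : Type*} [Fintype S] [Fintype A] (T : ℕ)
    (p1 : S → ℝ) (p : S → A → S → ℝ) (hpsum : ∀ s a, ∑ s' : S, p s a s' = 1)
    (pol : S → A → ℝ) (hpol : ∀ s, ∑ a : A, pol s a = 1) (g : S → A → ℝ) :
    Exp T p1 p pol (fun τ => ∑ t : Fin T, g (τ.1 t.castSucc) (τ.2 t))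
      = Exp T p1 p pol (fun τ => ∑ t : Fin T,
          ∑ a : A, pol (τ.1 t.castSucc) a * g (τ.1 t.castSucc) a) := by
  induction T generalizing p1 with
  | zero => simp
  | succ T ih =>
    rw [exp_succ, exp_succ]
    refine Finset.sum_congr rfl fun s _ => ?_
    have hsplit : ∀ (a : A) (c : ℝ) (f : ((Fin (T + 1) → S) × (Fin T → A)) → ℝ),
        Exp T (p s a) p pol (fun τ => c + f τ) = c + Exp T (p s a) p pol f := fun a c f => by
      rw [exp_add T (p s a) p pol (fun _ => c) f, exp_const T _ p hpsum pol hpol, hpsum, one_mul]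
    simp only [Fin.sum_univ_succ, Fin.cons_zero, Fin.cons_succ, Fin.castSucc_zero,
      Fin.castSucc_succ]
    simp_rw [hsplit, ih, mul_add, Finset.sum_add_distrib]
    congr 1
    rw [← Finset.sum_mul, ← Finset.mul_sum, hpol, mul_one, Finset.mul_sum]
    exact Finset.sum_congr rfl fun a _ => by ring

/-- The pointwise inequality behind Gibbs' inequality, a rewriting of `log x ≤ x - 1`. -/
lemma sub_le_mul_log_div {x y : ℝ} (hx : 0 < x) (hy : 0 < y) :
    x - y ≤ x * Real.log (x / y) := by
  have h := Real.log_le_sub_one_of_pos (div_pos hy hx)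
  have h' : x * Real.log (y / x) ≤ x * (y / x - 1) := mul_le_mul_of_nonneg_left h hx.le
  rw [← inv_div x y, Real.log_inv, inv_div] at h'
  have e : x * (y / x - 1) = y - x := by field_simp
  linarith

lemma sub_lt_mul_log_div {x y : ℝ} (hx : 0 < x) (hy : 0 < y) (hxy : x ≠ y) :
    x - y < x * Real.log (x / y) := by
  have hne : y / x ≠ 1 := fun h => hxy ((div_eq_one_iff_eq hx.ne').1 h).symm
  have h := Real.log_lt_sub_one_of_pos (div_pos hy hx) hne
  have h' : x * Real.log (y / x) < x * (y / x - 1) := mul_lt_mul_of_pos_left h hx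
  rw [← inv_div x y, Real.log_inv, inv_div] at h'
  have e : x * (y / x - 1) = y - x := by field_simp
  linarith

lemma gibbs_nonneg {A : Type*} [Fintype A] (q q' : A → ℝ) (hq : ∀ a, 0 < q a)
    (hq' : ∀ a, 0 < q' a) (hs : ∑ a, q a = 1) (hs' : ∑ a, q' a = 1) :
    0 ≤ ∑ a, q a * Real.log (q a / q' a) := by
  calc (0 : ℝ) = ∑ a, (q a - q' a) := by rw [Finset.sum_sub_distrib, hs, hs', sub_self]
    _ ≤ _ := Finset.sum_le_sum fun a _ => sub_le_mul_log_div (hq a) (hq' a)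

lemma gibbs_eq {A : Type*} [Fintype A] (q q' : A → ℝ) (hq : ∀ a, 0 < q a)
    (hq' : ∀ a, 0 < q' a) (hs : ∑ a, q a = 1) (hs' : ∑ a, q' a = 1)
    (h : ∑ a, q a * Real.log (q a / q' a) = 0) : q = q' := by
  by_contra hne
  obtain ⟨b, hb⟩ := Function.ne_iff.1 hne
  have : ∑ a, (q a - q' a) < ∑ a, q a * Real.log (q a / q' a) :=
    Finset.sum_lt_sum (fun a _ => sub_le_mul_log_div (hq a) (hq' a))
      ⟨b, Finset.mem_univ b, sub_lt_mul_log_div (hq b) (hq' b) hb⟩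
  rw [Finset.sum_sub_distrib, hs, hs', sub_self, h] at this
  exact lt_irrefl _ this

lemma trajProb_pos {S A : Type*} [Fintype S] [Fintype A] (T : ℕ)
    (p1 : S → ℝ) (hp1 : ∀ s, 0 < p1 s) (p : S → A → S → ℝ) (hp : ∀ s a s', 0 < p s a s')
    (pol : S → A → ℝ) (hpol : ∀ s a, 0 < pol s a) (τ : (Fin (T + 1) → S) × (Fin T → A)) :
    0 < trajProb T p1 p pol τ :=
  mul_pos (hp1 _) (Finset.prod_pos fun _ _ => mul_pos (hpol _ _) (hp _ _ _))

/-- **Appendix Lemma (MaxEnt RL solves robust-reward control).** With reward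
`r = log π*`, for every full-support policy `π`:
`J_MaxEnt(π; p, r) = −E_{p^π}[Σ_t KL(π(·|s_t) ‖ π*(·|s_t))] ≤ 0`, with equality iff
`π = π*`; hence `π*` is the unique maximizer of `J_MaxEnt(·; p, r)`. Consequently, if
`π*` maximizes the robust objective `π ↦ inf_{r'∈R} E_{p^π}[Σ_t r'(s_t,a_t)]` over
full-support policies, then every maximizer of the MaxEnt objective with reward
`log π*` maximizes that robust objective. -/
theorem maxent_reward_log_pistar_solves_robust_reward_control
    {S A : Type*} [Fintype S] [Fintype A] [Nonempty S] [Nonempty A]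
    (T : ℕ) (hT : 1 ≤ T)
    (p1 : S → ℝ) (hp1 : ∀ s, 0 < p1 s) (hp1sum : ∑ s : S, p1 s = 1)
    (p : S → A → S → ℝ) (hp : ∀ s a s', 0 < p s a s')
    (hpsum : ∀ s a, ∑ s' : S, p s a s' = 1)
    (pistar : S → A → ℝ) (hpistar : ∀ s a, 0 < pistar s a)
    (hpistarsum : ∀ s, ∑ a : A, pistar s a = 1) :
    (∀ pol : S → A → ℝ, (∀ s a, 0 < pol s a) → (∀ s, ∑ a : A, pol s a = 1) →
      JMaxEnt T p1 p pol (fun s a => Real.log (pistar s a))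
          = - Exp T p1 p pol (fun τ => ∑ t : Fin T,
              ∑ a : A, pol (τ.1 t.castSucc) a *
                Real.log (pol (τ.1 t.castSucc) a / pistar (τ.1 t.castSucc) a))
        ∧ JMaxEnt T p1 p pol (fun s a => Real.log (pistar s a)) ≤ 0
        ∧ (JMaxEnt T p1 p pol (fun s a => Real.log (pistar s a)) = 0 ↔ pol = pistar))
    ∧ (∀ pol : S → A → ℝ, (∀ s a, 0 < pol s a) → (∀ s, ∑ a : A, pol s a = 1) →
        pol ≠ pistar →
        JMaxEnt T p1 p pol (fun s a => Real.log (pistar s a))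
          < JMaxEnt T p1 p pistar (fun s a => Real.log (pistar s a)))
    ∧ (∀ R : Set (S → A → ℝ), R.Nonempty →
        (∀ pol : S → A → ℝ, (∀ s a, 0 < pol s a) → (∀ s, ∑ a : A, pol s a = 1) →
          (⨅ r' : R, Exp T p1 p pol (fun τ => ∑ t : Fin T,
              r'.1 (τ.1 t.castSucc) (τ.2 t)))
            ≤ ⨅ r' : R, Exp T p1 p pistar (fun τ => ∑ t : Fin T,
                r'.1 (τ.1 t.castSucc) (τ.2 t))) →
        ∀ pol : S → A → ℝ, (∀ s a, 0 < pol s a) → (∀ s, ∑ a : A, pol s a = 1) →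
          (∀ pol' : S → A → ℝ, (∀ s a, 0 < pol' s a) → (∀ s, ∑ a : A, pol' s a = 1) →
            JMaxEnt T p1 p pol' (fun s a => Real.log (pistar s a))
              ≤ JMaxEnt T p1 p pol (fun s a => Real.log (pistar s a))) →
          ∀ pol' : S → A → ℝ, (∀ s a, 0 < pol' s a) → (∀ s, ∑ a : A, pol' s a = 1) →
            (⨅ r' : R, Exp T p1 p pol' (fun τ => ∑ t : Fin T,
                r'.1 (τ.1 t.castSucc) (τ.2 t)))
              ≤ ⨅ r' : R, Exp T p1 p pol (fun τ => ∑ t : Fin T,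
                  r'.1 (τ.1 t.castSucc) (τ.2 t))) := by
  have key : ∀ pol : S → A → ℝ, (∀ s a, 0 < pol s a) → (∀ s, ∑ a : A, pol s a = 1) →
      JMaxEnt T p1 p pol (fun s a => Real.log (pistar s a))
          = - Exp T p1 p pol (fun τ => ∑ t : Fin T,
              ∑ a : A, pol (τ.1 t.castSucc) a *
                Real.log (pol (τ.1 t.castSucc) a / pistar (τ.1 t.castSucc) a))
        ∧ JMaxEnt T p1 p pol (fun s a => Real.log (pistar s a)) ≤ 0
        ∧ (JMaxEnt T p1 p pol (fun s a => Real.log (pistar s a)) = 0 ↔ pol = pistar) := by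
    intro pol hpol hpolsum
    have hlog : ∀ s a, pol s a * (Real.log (pistar s a) - Real.log (pol s a))
        = -(pol s a * Real.log (pol s a / pistar s a)) := fun s a => by
      rw [Real.log_div (hpol s a).ne' (hpistar s a).ne']
      ring
    have hJ : JMaxEnt T p1 p pol (fun s a => Real.log (pistar s a))
          = - Exp T p1 p pol (fun τ => ∑ t : Fin T,
              ∑ a : A, pol (τ.1 t.castSucc) a *
                Real.log (pol (τ.1 t.castSucc) a / pistar (τ.1 t.castSucc) a)) := by
      rw [JMaxEnt, exp_sum_eq_exp_sum_average T p1 p hpsum pol hpolsum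
        (fun s a => Real.log (pistar s a) - Real.log (pol s a))]
      simp only [hlog, Exp, Finset.sum_neg_distrib, mul_neg]
    have hKL : ∀ s, 0 ≤ ∑ a : A, pol s a * Real.log (pol s a / pistar s a) := fun s =>
      gibbs_nonneg _ _ (hpol s) (hpistar s) (hpolsum s) (hpistarsum s)
    have hprob := trajProb_pos T p1 hp1 p hp pol hpol
    have hterm : ∀ τ ∈ (Finset.univ : Finset ((Fin (T + 1) → S) × (Fin T → A))),
        0 ≤ trajProb T p1 p pol τ * ∑ t : Fin T, ∑ a : A, pol (τ.1 t.castSucc) a *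
          Real.log (pol (τ.1 t.castSucc) a / pistar (τ.1 t.castSucc) a) := fun τ _ =>
      mul_nonneg (hprob τ).le (Finset.sum_nonneg fun t _ => hKL _)
    refine ⟨hJ, ?_, ?_, ?_⟩
    · rw [hJ]
      exact neg_nonpos.2 (Finset.sum_nonneg hterm)
    · intro h0
      rw [hJ, neg_eq_zero, Exp, Finset.sum_eq_zero_iff_of_nonneg hterm] at h0
      funext s
      apply gibbs_eq _ _ (hpol s) (hpistar s) (hpolsum s) (hpistarsum s)
      -- Only the states of a trajectory enter, so the constant state sequence tests `s` alone.
      have h1 := (mul_eq_zero.1 (h0 (fun _ => s, fun _ => Classical.arbitrary A)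
        (Finset.mem_univ _))).resolve_left (hprob _).ne'
      exact (Finset.sum_eq_zero_iff_of_nonneg fun t _ => hKL s).1 h1 ⟨0, hT⟩ (Finset.mem_univ _)
    · rintro rfl
      simp [JMaxEnt, Exp]
  have hstar := ((key pistar hpistar hpistarsum).2.2).2 rfl
  refine ⟨key, fun pol hpol hpolsum hne => ?_, ?_⟩
  · obtain ⟨-, hle, hiff⟩ := key pol hpol hpolsum
    rw [hstar]
    exact lt_of_le_of_ne hle fun h => hne (hiff.1 h)
  · intro R _ hrob pol hpol hpolsum hmax
    obtain ⟨-, hle, hiff⟩ := key pol hpol hpolsum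
    have hge := hmax pistar hpistar hpistarsum
    rw [hstar] at hge
    obtain rfl : pol = pistar := hiff.1 (le_antisymm hle hge)
    exact hrob
end

section
/- Fix a finite-horizon MDP with finite nonempty state space S, finite nonempty action space A, horizon T ≥ 1, initial distribution p₁, and dynamics p. Let R be a nonempty collection of reward functions r' : S×A → ℝ, and let r* : S×A → ℝ satisfy the feasibility constraints Σ_{a∈A} exp(r*(s,a) − r'(s,a)) ≤ 1 for every s ∈ S and every r' ∈ R. Then for every full-support policy π, the MaxEnt objective with reward r* lower-bounds the robust-reward objective: J_MaxEnt(π; p, r*) ≤ inf_{r'∈R} E_{p^π}[Σ_{t=1}^T r'(s_t,a_t)]. (Appendix Lemma: any reward in the feasible set R*(R) yields a MaxEnt objective that lower-bounds the robust-reward control objective for R.) -/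
/-!
Fix `r' ∈ R` and put `g s a = rstar s a - log (pol s a) - r' s a`. From `log x ≤ x - 1` at
`x = exp (rstar s a - r' s a) / pol s a`, each state satisfies
`∑ a, pol s a * g s a ≤ ∑ a, exp (rstar s a - r' s a) - ∑ a, pol s a ≤ 0`: the feasibility
constraint makes the one-step expected gap nonpositive (`sum_pol_mul_gap_nonpos`). By
conditioning on the first step (`Exp_succ`) and induction on the horizon, the expected total gap
is nonpositive too (`Exp_sum_nonpos`), which is the claim for this `r'`; the infimum follows.
-/

open Finset Real

/-- Conditioning on the first state-action pair `(s, a)`: the rest of the trajectory is a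
trajectory of horizon `T` with initial distribution `p s a`. -/
lemma Exp_succ {S A : Type*} [Fintype S] [Fintype A] (T : ℕ)
    (p1 : S → ℝ) (p : S → A → S → ℝ) (pol : S → A → ℝ)
    (f : ((Fin (T + 1 + 1) → S) × (Fin (T + 1) → A)) → ℝ) :
    Exp (T + 1) p1 p pol f = ∑ s, ∑ a, p1 s * (pol s a *
      Exp T (p s a) p pol (fun τ => f (Fin.cons s τ.1, Fin.cons a τ.2))) := by
  simp only [Exp, Fintype.sum_prod_type]
  rw [← (Fin.consEquiv (fun _ : Fin (T + 1 + 1) => S)).sum_comp, Fintype.sum_prod_type]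
  refine Finset.sum_congr rfl fun s _ => ?_
  simp_rw [← (Fin.consEquiv (fun _ : Fin (T + 1) => A)).sum_comp, Fintype.sum_prod_type]
  rw [Finset.sum_comm]
  refine Finset.sum_congr rfl fun a _ => ?_
  simp_rw [Finset.mul_sum]
  refine Finset.sum_congr rfl fun σ _ => Finset.sum_congr rfl fun α _ => ?_
  simp only [trajProb, Fin.consEquiv, Equiv.coe_fn_mk, Fin.prod_univ_succ, Fin.castSucc_zero,
    Fin.cons_zero, Fin.cons_succ, Fin.castSucc_succ]
  ring

/-- The trajectory weights have total mass equal to that of `p1`. -/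
lemma Exp_one {S A : Type*} [Fintype S] [Fintype A]
    (p : S → A → S → ℝ) (hpsum : ∀ s a, ∑ s' : S, p s a s' = 1)
    (pol : S → A → ℝ) (hpolsum : ∀ s, ∑ a : A, pol s a = 1) (T : ℕ) (p1 : S → ℝ) :
    Exp T p1 p pol (fun _ => 1) = ∑ s, p1 s := by
  induction T generalizing p1 with
  | zero =>
    simp only [Exp, trajProb, Fintype.sum_prod_type]
    simpa using (Equiv.funUnique (Fin 1) S).sum_comp p1
  | succ T ih =>
    rw [Exp_succ]
    simp only [ih, hpsum, mul_one, ← Finset.mul_sum, hpolsum]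

/-- If the one-step cost `g` has nonpositive mean under `pol` in every state, then its expected
total along a trajectory is nonpositive. Only nonnegativity of `p1` matters, not its mass. -/
lemma Exp_sum_nonpos {S A : Type*} [Fintype S] [Fintype A]
    (p : S → A → S → ℝ) (hp : ∀ s a s', 0 ≤ p s a s')
    (hpsum : ∀ s a, ∑ s' : S, p s a s' = 1)
    (pol : S → A → ℝ) (hpol : ∀ s a, 0 < pol s a)
    (hpolsum : ∀ s, ∑ a : A, pol s a = 1)
    (g : S → A → ℝ) (hg : ∀ s, ∑ a, pol s a * g s a ≤ 0)
    (T : ℕ) (p1 : S → ℝ) (hp1 : ∀ s, 0 ≤ p1 s) :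
    Exp T p1 p pol (fun τ => ∑ t : Fin T, g (τ.1 t.castSucc) (τ.2 t)) ≤ 0 := by
  induction T generalizing p1 with
  | zero => simp [Exp]
  | succ T ih =>
    rw [Exp_succ]
    refine Finset.sum_nonpos fun s _ => ?_
    rw [← Finset.mul_sum]
    refine mul_nonpos_of_nonneg_of_nonpos (hp1 s) (le_trans (Finset.sum_le_sum fun a _ => ?_) (hg s))
    refine mul_le_mul_of_nonneg_left ?_ (hpol s a).le
    have key : Exp T (p s a) p pol (fun τ => ∑ t : Fin (T + 1),
          g ((Fin.cons s τ.1 : Fin (T + 1 + 1) → S) t.castSucc)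
            ((Fin.cons a τ.2 : Fin (T + 1) → A) t))
        = g s a * Exp T (p s a) p pol (fun _ => 1)
          + Exp T (p s a) p pol (fun τ => ∑ t : Fin T, g (τ.1 t.castSucc) (τ.2 t)) := by
      simp only [Exp, Finset.mul_sum (a := g s a), ← Finset.sum_add_distrib]
      refine Finset.sum_congr rfl fun τ _ => ?_
      simp only [Fin.sum_univ_succ, Fin.castSucc_zero, Fin.cons_zero, Fin.cons_succ,
        Fin.castSucc_succ]
      ring
    rw [key, Exp_one p hpsum pol hpolsum, hpsum]
    linarith [ih (p s a) (hp s a)]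

/-- Gibbs' inequality for one state: the feasibility constraint bounds the entropy-regularized
gap between `r` and `r'`. -/
lemma sum_pol_mul_gap_nonpos {A : Type*} [Fintype A] (q : A → ℝ) (hq : ∀ a, 0 < q a)
    (hqsum : ∑ a, q a = 1) (r r' : A → ℝ) (h : ∑ a, Real.exp (r a - r' a) ≤ 1) :
    ∑ a, q a * (r a - Real.log (q a) - r' a) ≤ 0 := by
  have hle : ∑ a, q a * (r a - Real.log (q a) - r' a)
      ≤ ∑ a, (Real.exp (r a - r' a) - q a) := by
    refine Finset.sum_le_sum fun a _ => ?_
    have h1 := Real.log_le_sub_one_of_pos (div_pos (Real.exp_pos (r a - r' a)) (hq a))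
    rw [Real.log_div (Real.exp_ne_zero _) (hq a).ne', Real.log_exp] at h1
    have h2 := mul_le_mul_of_nonneg_left h1 (hq a).le
    rw [mul_sub (q a) (_ / _), mul_div_cancel₀ _ (hq a).ne'] at h2
    linarith
  rw [Finset.sum_sub_distrib, hqsum] at hle
  linarith

/-- **Appendix Lemma (feasible rewards lower-bound robust-reward control).** If `r*`
satisfies `Σ_a exp(r*(s,a) − r'(s,a)) ≤ 1` for all `s` and all `r' ∈ R`, then for every
full-support policy `π`, `J_MaxEnt(π; p, r*) ≤ inf_{r'∈R} E_{p^π}[Σ_t r'(s_t,a_t)]`. -/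
theorem feasible_reward_maxent_lower_bounds_robust_reward
    {S A : Type*} [Fintype S] [Fintype A] [Nonempty S] [Nonempty A]
    (T : ℕ) (hT : 1 ≤ T)
    (p1 : S → ℝ) (hp1 : ∀ s, 0 ≤ p1 s) (hp1sum : ∑ s : S, p1 s = 1)
    (p : S → A → S → ℝ) (hp : ∀ s a s', 0 ≤ p s a s')
    (hpsum : ∀ s a, ∑ s' : S, p s a s' = 1)
    (pol : S → A → ℝ) (hpol : ∀ s a, 0 < pol s a)
    (hpolsum : ∀ s, ∑ a : A, pol s a = 1)
    (R : Set (S → A → ℝ)) (hR : R.Nonempty)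
    (rstar : S → A → ℝ)
    (hfeas : ∀ r' ∈ R, ∀ s : S, ∑ a : A, Real.exp (rstar s a - r' s a) ≤ 1) :
    JMaxEnt T p1 p pol rstar
      ≤ ⨅ r' : R, Exp T p1 p pol (fun τ => ∑ t : Fin T,
          r'.1 (τ.1 t.castSucc) (τ.2 t)) := by
  haveI : Nonempty R := hR.to_subtype
  refine le_ciInf fun r' => ?_
  have h := Exp_sum_nonpos p hp hpsum pol hpol hpolsum
    (fun s a => rstar s a - Real.log (pol s a) - r'.1 s a)
    (fun s => sum_pol_mul_gap_nonpos (pol s) (hpol s) (hpolsum s) _ _ (hfeas r'.1 r'.2 s))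
    T p1 hp1
  rw [← sub_nonpos]
  refine le_of_eq_of_le ?_ h
  simp only [JMaxEnt, Exp, ← Finset.sum_sub_distrib, ← mul_sub]
end
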